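/- Let d be a positive integer, let m_1,…,m_d and u_1,…,u_{d−1} be non-negative integers, and set s := (m_1+2, {1}_{u_1}, …, m_{d−1}+2, {1}_{u_{d−1}}, m_d+2), a tuple of length ‖s‖ with weight |s|. Let p ∈ [1/2, 3/2] with p ≠ 1. Then Li*_{{1}_{|s|}}( ⊔_{i=1}^{d−1}{1−p, {1}_{m_i}, 1/(1−p), {1}_{u_i}}, 1−p, {1}_{m_d+1} ) = −Li*_s({1}_{‖s‖−1}, 1 − 1/p). -/

import Mathlib

/-- One-dimensional polylogarithm `Li_s(x) = ∑_{n≥1} x^n/n^s`. -/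
noncomputable def Li (s : ℕ) (x : ℝ) : ℝ := ∑' n : ℕ, x ^ (n + 1) / (n + 1 : ℝ) ^ s

/-- Multiple polylogarithm
`Li*_{s₁,…,s_d}(x₁,…,x_d) = ∑_{n₁ ≥ ⋯ ≥ n_d ≥ 1} ∏ᵢ xᵢ^{nᵢ}/nᵢ^{sᵢ}`. -/
noncomputable def LiStar (s : List ℕ) (x : List ℝ) : ℝ :=
  ∑' m : {m : Fin s.length → ℕ // (∀ i j : Fin s.length, i ≤ j → m j ≤ m i) ∧ ∀ i, 1 ≤ m i},
    ∏ i : Fin s.length, x.getD (i : ℕ) 0 ^ m.1 i / (m.1 i : ℝ) ^ s.get i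

/-- The exponent tuple `s = (m₁+2, {1}_{u₁}, …, m_d+2, {1}_{u_d}, m_{d+1}+2)`
(here `d+1` plays the role of the paper's `d ≥ 1`). -/
def sTup (d : ℕ) (m : Fin (d + 1) → ℕ) (u : Fin d → ℕ) : List ℕ :=
  (List.ofFn fun i : Fin d => (m i.castSucc + 2) :: List.replicate (u i) 1).flatten ++
    [m (Fin.last d) + 2]

/-- The argument prefix `⊔_{i=1}^{d}{1−p, {1}_{mᵢ}, 1/(1−p), {1}_{uᵢ}}`. -/
noncomputable def xPre (d : ℕ) (m : Fin (d + 1) → ℕ) (u : Fin d → ℕ) (p : ℝ) : List ℝ :=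
  (List.ofFn fun i : Fin d =>
    (1 - p) :: (List.replicate (m i.castSucc) (1 : ℝ) ++
      (1 / (1 - p)) :: List.replicate (u i) (1 : ℝ))).flatten

/-!
Write `S_c` for the operator `(S_c a)_n = ∑_{k=1}^n c^(n-k) a_k / k`. Peeling off the outermost
summation index shows that the partial sums of both sides are words in such operators applied to a
geometric sequence `(z^n)`: the left side uses the letters `S_1` and `S_{1-p}` with `z = 1 - p`, the
right side the same word in `S_1` and `S_0` with `z = 1 - 1/p`.

The Euler transform `(E_t a)_n = ∑_k (n choose k) (1-t)^k t^(n-k) a_k` satisfies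
`E_t S_c = S_{t+(1-t)c} E_t` on sequences vanishing at `0`, and it turns `(z^n)` into `-(t^n)` when
`t + (1-t)z = 0`. Hence it exchanges the two sides up to sign. For `0 ≤ t < 1` it preserves limits:
take `t = 1 - p` when `p < 1`, and `t = 1 - 1/p` when `p > 1`.
-/

open Filter Finset Topology

section Algebra

variable {K : Type*} [Field K]

/-- The geometric sequence `z, z², z³, …` indexed from `1`, extended by `0` at `0`. It is the
innermost layer of the nested sums below. -/
def geomSeq (z : K) : ℕ → K
  | 0 => 0
  | n + 1 => z ^ (n + 1)

/-- The weighted harmonic sum `n ↦ ∑_{k=1}^n c^(n-k) a_k / k` of a sequence `a`, given by its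
recursion in `n`. It is one layer of a nested sum. -/
def harmonicSum (c : K) (a : ℕ → K) : ℕ → K
  | 0 => 0
  | n + 1 => c * harmonicSum c a n + a (n + 1) / ((n : K) + 1)

/-- The nested weighted harmonic sums `S_{c₁} (S_{c₂} (⋯ (z^n)))` along a list `[c₁, c₂, …]` of
weights, outermost weight first. Partial sums of multiple polylogarithms have this form. -/
def iteratedHarmonicSum (cs : List K) (z : K) : ℕ → K := cs.foldr harmonicSum (geomSeq z)

/-- The Euler transform `n ↦ ∑_{k=0}^n (n choose k) (1-t)^k t^(n-k) a_k`, i.e. averaging against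
the binomial distribution with success probability `1 - t`. -/
def eulerTransform (t : K) (a : ℕ → K) (n : ℕ) : K :=
  ∑ k ∈ range (n + 1), (n.choose k : K) * ((1 - t) ^ k * t ^ (n - k) * a k)

theorem iteratedHarmonicSum_apply_zero (cs : List K) (z : K) : iteratedHarmonicSum cs z 0 = 0 := by
  cases cs <;> rfl

theorem harmonicSum_neg (c : K) (a : ℕ → K) : harmonicSum c (-a) = -harmonicSum c a := by
  funext n
  induction n with
  | zero => simp [harmonicSum]
  | succ n ih => simp only [harmonicSum, Pi.neg_apply, ih]; ring

theorem eulerTransform_apply_zero (t : K) (a : ℕ → K) : eulerTransform t a 0 = a 0 := by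
  simp [eulerTransform]

theorem eulerTransform_apply_succ (t : K) (a : ℕ → K) (n : ℕ) :
    eulerTransform t a (n + 1) =
      t * eulerTransform t a n + (1 - t) * eulerTransform t (fun k ↦ a (k + 1)) n := by
  simp only [eulerTransform]
  rw [sum_choose_succ_mul (fun i j ↦ (1 - t) ^ i * t ^ j * a i) n, mul_sum, mul_sum]
  congr 1 <;> refine sum_congr rfl fun k hk ↦ ?_
  · rw [Nat.succ_sub (mem_range_succ_iff.1 hk), pow_succ]
    ring
  · ring

theorem eulerTransform_mul_add (t c : K) (a b : ℕ → K) (n : ℕ) :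
    eulerTransform t (fun k ↦ c * a k + b k) n =
      c * eulerTransform t a n + eulerTransform t b n := by
  simp only [eulerTransform]
  rw [mul_sum, ← sum_add_distrib]
  exact sum_congr rfl fun k _ ↦ by ring

theorem eulerTransform_shift_div [CharZero K] (t : K) {a : ℕ → K} (ha : a 0 = 0) (n : ℕ) :
    (1 - t) * eulerTransform t (fun k ↦ a (k + 1) / ((k : K) + 1)) n =
      eulerTransform t a (n + 1) / ((n : K) + 1) := by
  simp only [eulerTransform]
  rw [sum_range_succ' _ (n + 1), ha, mul_zero, mul_zero, add_zero, mul_sum, sum_div]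
  refine sum_congr rfl fun k _ ↦ ?_
  have absorption : ((n : K) + 1) * n.choose k = (n + 1).choose (k + 1) * ((k : K) + 1) := by
    exact_mod_cast Nat.add_one_mul_choose_eq n k
  have hn : (n : K) + 1 ≠ 0 := n.cast_add_one_ne_zero
  have hk : (k : K) + 1 ≠ 0 := k.cast_add_one_ne_zero
  rw [Nat.add_sub_add_right]
  field_simp
  linear_combination ((1 - t) ^ (k + 1) * t ^ (n - k) * a (k + 1)) * absorption

theorem eulerTransform_harmonicSum [CharZero K] (t c : K) {a : ℕ → K} (ha : a 0 = 0) :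
    eulerTransform t (harmonicSum c a) = harmonicSum (t + (1 - t) * c) (eulerTransform t a) := by
  funext n
  induction n with
  | zero => rw [eulerTransform_apply_zero]; rfl
  | succ n ih =>
    calc eulerTransform t (harmonicSum c a) (n + 1)
        = t * eulerTransform t (harmonicSum c a) n + (1 - t) * eulerTransform t
            (fun k ↦ c * harmonicSum c a k + a (k + 1) / ((k : K) + 1)) n :=
          eulerTransform_apply_succ ..
      _ = (t + (1 - t) * c) * eulerTransform t (harmonicSum c a) n +
            eulerTransform t a (n + 1) / ((n : K) + 1) := by
          rw [eulerTransform_mul_add, mul_add, eulerTransform_shift_div t ha]; ring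
      _ = harmonicSum (t + (1 - t) * c) (eulerTransform t a) (n + 1) := by rw [ih, harmonicSum]

theorem eulerTransform_geomSeq (t z : K) :
    eulerTransform t (geomSeq z) = geomSeq (t + (1 - t) * z) - geomSeq t := by
  funext n
  cases n with
  | zero => simp [eulerTransform_apply_zero, geomSeq]
  | succ n =>
    have binomial := add_pow ((1 - t) * z) t (n + 1)
    rw [add_comm, sum_range_succ'] at binomial
    simp only [pow_zero, one_mul, Nat.sub_zero, Nat.choose_zero_right, Nat.cast_one, mul_one]
      at binomial
    simp only [eulerTransform, Pi.sub_apply, geomSeq]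
    rw [binomial, add_sub_cancel_right, sum_range_succ', mul_zero, mul_zero, add_zero]
    exact sum_congr rfl fun k _ ↦ by rw [mul_pow]; ring

theorem eulerTransform_iteratedHarmonicSum [CharZero K] {t z : K} (hz : t + (1 - t) * z = 0)
    (cs : List K) :
    eulerTransform t (iteratedHarmonicSum cs z) =
      -iteratedHarmonicSum (cs.map fun c ↦ t + (1 - t) * c) t := by
  induction cs with
  | nil =>
    have geomSeq_zero : geomSeq (0 : K) = 0 := funext fun n ↦ by cases n <;> simp [geomSeq]
    exact (eulerTransform_geomSeq t z).trans (by rw [hz, geomSeq_zero, zero_sub]; rfl)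
  | cons c cs ih =>
    have step := eulerTransform_harmonicSum t c (iteratedHarmonicSum_apply_zero cs z)
    rw [ih, harmonicSum_neg] at step
    exact step

theorem foldr_replicate_zero_harmonicSum (r : ℕ) (a : ℕ → K) (n : ℕ) :
    (List.replicate r 0).foldr harmonicSum a n = a n / (n : K) ^ r := by
  induction r generalizing n with
  | zero => simp
  | succ r ih =>
    rw [List.replicate_succ, List.foldr_cons]
    cases n with
    | zero => simp [harmonicSum]
    | succ n => rw [harmonicSum, ih, zero_mul, zero_add, pow_succ, div_div, Nat.cast_succ]

end Algebra

section Limits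

/-- The sufficiency half of the Silverman–Toeplitz theorem, for nonnegative weights of mass `1`. -/
theorem tendsto_sum_smul_of_sum_eq_one {ι κ E : Type*} [SeminormedAddCommGroup E] [NormedSpace ℝ E]
    {l : Filter ι} {s : ι → Finset κ} {w : ι → κ → ℝ} {a : κ → E} {L : E}
    (hw : ∀ i k, 0 ≤ w i k) (hsum : ∀ i, ∑ k ∈ s i, w i k = 1)
    (hcol : ∀ k, Tendsto (w · k) l (𝓝 0)) (ha : Tendsto a cofinite (𝓝 L)) :
    Tendsto (fun i ↦ ∑ k ∈ s i, w i k • a k) l (𝓝 L) := by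
  classical
  rw [Metric.tendsto_nhds]
  intro ε hε
  have hfin : {k | ¬dist (a k) L < ε / 2}.Finite :=
    eventually_cofinite.1 (Metric.tendsto_nhds.1 ha _ (half_pos hε))
  set F := hfin.toFinset with hF
  have hhead : Tendsto (fun i ↦ ∑ k ∈ F, w i k * dist (a k) L) l (𝓝 0) := by
    simpa only [zero_mul, sum_const_zero] using
      tendsto_finsetSum F fun k _ ↦ (hcol k).mul_const (dist (a k) L)
  filter_upwards [hhead.eventually_lt_const (half_pos hε)] with i hi
  have hterm : ∀ k, w i k * dist (a k) L ≤
      (if k ∈ F then w i k * dist (a k) L else 0) + w i k * (ε / 2) := fun k ↦ by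
    split_ifs with hk
    · exact le_add_of_nonneg_right (mul_nonneg (hw i k) (half_pos hε).le)
    · have hlt : dist (a k) L < ε / 2 := by simpa [hF] using hk
      simpa using mul_le_mul_of_nonneg_left hlt.le (hw i k)
  calc dist (∑ k ∈ s i, w i k • a k) L
      = ‖∑ k ∈ s i, w i k • (a k - L)‖ := by
        simp only [smul_sub, sum_sub_distrib, ← sum_smul, hsum, one_smul, dist_eq_norm]
    _ ≤ ∑ k ∈ s i, w i k * dist (a k) L := norm_sum_le_of_le _ fun k _ ↦ by
        rw [norm_smul, Real.norm_of_nonneg (hw i k), dist_eq_norm]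
    _ ≤ ∑ k ∈ s i, ((if k ∈ F then w i k * dist (a k) L else 0) + w i k * (ε / 2)) :=
        sum_le_sum fun k _ ↦ hterm k
    _ = ∑ k ∈ s i with k ∈ F, w i k * dist (a k) L + ε / 2 := by
        rw [sum_add_distrib, ← sum_mul, hsum, one_mul, sum_filter]
    _ ≤ ∑ k ∈ F, w i k * dist (a k) L + ε / 2 := by
        gcongr ?_ + _
        exact sum_le_sum_of_subset_of_nonneg (fun k hk ↦ (mem_filter.1 hk).2)
          fun k _ _ ↦ mul_nonneg (hw i k) dist_nonneg
    _ < ε := by linarith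

theorem tendsto_choose_mul_pow_mul_pow {t : ℝ} (ht : |t| < 1) (r : ℝ) (k : ℕ) :
    Tendsto (fun n : ℕ ↦ (n.choose k : ℝ) * (r ^ k * t ^ (n - k))) atTop (𝓝 0) := by
  rw [← tendsto_add_atTop_iff_nat k]
  have h := (summable_choose_mul_geometric_of_norm_lt_one k
    (by rwa [Real.norm_eq_abs] : ‖t‖ < 1)).tendsto_atTop_zero.const_mul (r ^ k)
  rw [mul_zero] at h
  refine h.congr fun n ↦ ?_
  rw [Nat.add_sub_cancel]
  ring

theorem tendsto_eulerTransform {t L : ℝ} {a : ℕ → ℝ} (ht0 : 0 ≤ t) (ht1 : t < 1)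
    (ha : Tendsto a atTop (𝓝 L)) : Tendsto (eulerTransform t a) atTop (𝓝 L) := by
  have hw (n k : ℕ) : 0 ≤ (n.choose k : ℝ) * ((1 - t) ^ k * t ^ (n - k)) := by
    have := sub_nonneg.2 ht1.le
    positivity
  have hsum (n : ℕ) :
      ∑ k ∈ range (n + 1), (n.choose k : ℝ) * ((1 - t) ^ k * t ^ (n - k)) = 1 := by
    have binomial := add_pow (1 - t) t n
    rw [sub_add_cancel, one_pow] at binomial
    exact (sum_congr rfl fun k _ ↦ mul_comm _ _).trans binomial.symm
  have h := tendsto_sum_smul_of_sum_eq_one hw hsum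
    (tendsto_choose_mul_pow_mul_pow (abs_lt.2 ⟨by linarith, ht1⟩) (1 - t))
    (Nat.cofinite_eq_atTop ▸ ha)
  exact h.congr fun n ↦ sum_congr rfl fun k _ ↦ mul_assoc ..

theorem tendsto_iteratedHarmonicSum_map {t z L : ℝ} {cs : List ℝ} (ht0 : 0 ≤ t) (ht1 : t < 1)
    (hz : t + (1 - t) * z = 0) (h : Tendsto (iteratedHarmonicSum cs z) atTop (𝓝 L)) :
    Tendsto (iteratedHarmonicSum (cs.map fun c ↦ t + (1 - t) * c) t) atTop (𝓝 (-L)) := by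
  have hE := tendsto_eulerTransform ht0 ht1 h
  rw [eulerTransform_iteratedHarmonicSum hz] at hE
  simpa using hE.neg

end Limits

section Bounds

variable {c z : ℝ} {a : ℕ → ℝ} {n : ℕ}

theorem geomSeq_nonneg (hz : 0 ≤ z) (n : ℕ) : 0 ≤ geomSeq z n := by
  cases n with
  | zero => exact le_rfl
  | succ n => exact pow_nonneg hz _

theorem harmonicSum_nonneg (hc : 0 ≤ c) (ha : ∀ n, 0 ≤ a n) (n : ℕ) : 0 ≤ harmonicSum c a n := by
  induction n with
  | zero => exact le_rfl
  | succ n ih =>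
    have := ha (n + 1)
    rw [harmonicSum]
    positivity

theorem iteratedHarmonicSum_nonneg {cs : List ℝ} (hcs : ∀ c ∈ cs, 0 ≤ c) (hz : 0 ≤ z) (n : ℕ) :
    0 ≤ iteratedHarmonicSum cs z n := by
  induction cs generalizing n with
  | nil => exact geomSeq_nonneg hz n
  | cons c cs ih =>
    obtain ⟨hc, hcs⟩ := List.forall_mem_cons.1 hcs
    exact harmonicSum_nonneg hc (ih hcs) n

theorem harmonicSum_div_succ_le (hS : 0 ≤ harmonicSum c a n) :
    harmonicSum c a n / ((n : ℝ) + 1) ≤ harmonicSum c a n / n := by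
  cases n with
  | zero => simp [harmonicSum]
  | succ n => exact div_le_div_of_nonneg_left hS (by positivity) (by linarith)

theorem harmonicSum_div_succ_sq_add_div_succ_le (hS : 0 ≤ harmonicSum c a n) :
    harmonicSum c a n / ((n : ℝ) + 1) ^ 2 + harmonicSum c a n / ((n : ℝ) + 1) ≤
      harmonicSum c a n / n := by
  cases n with
  | zero => simp [harmonicSum]
  | succ n =>
    rw [div_add_div _ _ (by positivity) (by positivity),
      div_le_div_iff₀ (by positivity) (by positivity)]
    push_cast
    nlinarith [mul_nonneg hS (by positivity : (0 : ℝ) ≤ n + 1 + 1)]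

/-- By telescoping, the potential `r` pays for the part of `f` that `g` does not cover. -/
theorem summable_of_add_le_add {f r g : ℕ → ℝ} (hf : ∀ n, 0 ≤ f n) (hr : ∀ n, 0 ≤ r n)
    (hg0 : ∀ n, 0 ≤ g n) (hg : Summable g) (h : ∀ n, f n + r (n + 1) ≤ r n + g n) :
    Summable f := by
  have hsum (N : ℕ) : ∑ n ∈ range N, f n + r N ≤ r 0 + ∑ n ∈ range N, g n := by
    induction N with
    | zero => simp
    | succ N ih => rw [sum_range_succ, sum_range_succ]; linarith [h N]
  refine summable_of_sum_range_le (c := r 0 + ∑' n, g n) hf fun N ↦ ?_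
  linarith [hsum N, hr N, hg.sum_le_tsum (range N) fun n _ ↦ hg0 n]

theorem summable_harmonicSum_div_sq (hc0 : 0 ≤ c) (hc1 : c ≤ 1) (ha0 : ∀ n, 0 ≤ a n)
    (ha : Summable fun n : ℕ ↦ a n / (n : ℝ) ^ 2) :
    Summable fun n : ℕ ↦ harmonicSum c a n / (n : ℝ) ^ 2 := by
  have hS := harmonicSum_nonneg hc0 ha0
  rw [← summable_nat_add_iff 1] at ha ⊢
  refine summable_of_add_le_add (r := fun n ↦ harmonicSum c a n / n)
    (fun n ↦ div_nonneg (hS _) (by positivity)) (fun n ↦ div_nonneg (hS n) n.cast_nonneg)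
    (fun n ↦ mul_nonneg zero_le_two (div_nonneg (ha0 _) (by positivity))) (ha.mul_left 2) fun n ↦ ?_
  push_cast
  have hrec : harmonicSum c a (n + 1) ≤ harmonicSum c a n + a (n + 1) / ((n : ℝ) + 1) := by
    rw [harmonicSum]
    gcongr
    exact mul_le_of_le_one_left (hS n) hc1
  have htail : a (n + 1) / ((n : ℝ) + 1) / ((n : ℝ) + 1) ^ 2 ≤ a (n + 1) / ((n : ℝ) + 1) ^ 2 := by
    gcongr
    exact div_le_self (ha0 _) (by simp)
  calc harmonicSum c a (n + 1) / ((n : ℝ) + 1) ^ 2 + harmonicSum c a (n + 1) / ((n : ℝ) + 1)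
      ≤ (harmonicSum c a n + a (n + 1) / ((n : ℝ) + 1)) / ((n : ℝ) + 1) ^ 2 +
          (harmonicSum c a n + a (n + 1) / ((n : ℝ) + 1)) / ((n : ℝ) + 1) := by gcongr
    _ = harmonicSum c a n / ((n : ℝ) + 1) ^ 2 + harmonicSum c a n / ((n : ℝ) + 1) +
          (a (n + 1) / ((n : ℝ) + 1) / ((n : ℝ) + 1) ^ 2 + a (n + 1) / ((n : ℝ) + 1) ^ 2) := by
        field_simp
    _ ≤ harmonicSum c a n / n + 2 * (a (n + 1) / ((n : ℝ) + 1) ^ 2) := by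
        linarith [harmonicSum_div_succ_sq_add_div_succ_le (hS n)]

theorem summable_harmonicSum_div (hc0 : 0 ≤ c) (hc1 : c < 1) (ha0 : ∀ n, 0 ≤ a n)
    (ha : Summable fun n : ℕ ↦ a n / (n : ℝ) ^ 2) :
    Summable fun n : ℕ ↦ harmonicSum c a n / n := by
  have hS := harmonicSum_nonneg hc0 ha0
  have hc : 0 < 1 - c := sub_pos.2 hc1
  rw [← summable_nat_add_iff 1] at ha ⊢
  rw [← summable_mul_left_iff hc.ne']
  refine summable_of_add_le_add (r := fun n ↦ c * (harmonicSum c a n / n))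
    (fun n ↦ mul_nonneg hc.le (div_nonneg (hS _) (by positivity)))
    (fun n ↦ mul_nonneg hc0 (div_nonneg (hS n) n.cast_nonneg))
    (fun n ↦ div_nonneg (ha0 _) (by positivity)) ha fun n ↦ ?_
  push_cast
  calc (1 - c) * (harmonicSum c a (n + 1) / ((n : ℝ) + 1)) +
        c * (harmonicSum c a (n + 1) / ((n : ℝ) + 1))
      = c * (harmonicSum c a n / ((n : ℝ) + 1)) + a (n + 1) / ((n : ℝ) + 1) ^ 2 := by
        rw [harmonicSum]; field_simp; ring
    _ ≤ c * (harmonicSum c a n / n) + a (n + 1) / ((n : ℝ) + 1) ^ 2 := by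
        gcongr ?_ + _
        exact mul_le_mul_of_nonneg_left (harmonicSum_div_succ_le (hS n)) hc0

theorem harmonicSum_one_eq_sum (a : ℕ → ℝ) (n : ℕ) :
    harmonicSum 1 a n = ∑ k ∈ range (n + 1), a k / k := by
  induction n with
  | zero => simp [harmonicSum]
  | succ n ih => rw [harmonicSum, ih, one_mul, sum_range_succ _ (n + 1), Nat.cast_succ]

theorem summable_iteratedHarmonicSum_div_sq {cs : List ℝ} (hcs : ∀ c ∈ cs, c ∈ Set.Icc 0 1)
    (hz0 : 0 ≤ z) (hz1 : z ≤ 1) :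
    Summable fun n : ℕ ↦ iteratedHarmonicSum cs z n / (n : ℝ) ^ 2 := by
  induction cs with
  | nil =>
    refine (Real.summable_one_div_nat_pow.2 one_lt_two).of_nonneg_of_le
      (fun n ↦ div_nonneg (geomSeq_nonneg hz0 n) (by positivity)) fun n ↦ ?_
    gcongr
    cases n with
    | zero => exact zero_le_one
    | succ n => exact pow_le_one₀ hz0 hz1
  | cons c cs ih =>
    obtain ⟨hc, hcs⟩ := List.forall_mem_cons.1 hcs
    exact summable_harmonicSum_div_sq hc.1 hc.2
      (iteratedHarmonicSum_nonneg (fun c hc ↦ (hcs c hc).1) hz0) (ih hcs)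

theorem exists_iteratedHarmonicSum_one_cons_le {cs : List ℝ} (hc0 : 0 ≤ c) (hc1 : c < 1)
    (hcs : ∀ c ∈ cs, c ∈ Set.Icc 0 1) (hz0 : 0 ≤ z) (hz1 : z ≤ 1) :
    ∃ C, ∀ n, iteratedHarmonicSum (1 :: c :: cs) z n ≤ C := by
  have h0 := iteratedHarmonicSum_nonneg (fun c hc ↦ (hcs c hc).1) hz0
  have hsum := summable_harmonicSum_div hc0 hc1 h0
    (summable_iteratedHarmonicSum_div_sq hcs hz0 hz1)
  refine ⟨_, fun n ↦ (harmonicSum_one_eq_sum _ n).trans_le (hsum.sum_le_tsum _ fun k _ ↦ ?_)⟩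
  exact div_nonneg (harmonicSum_nonneg hc0 h0 k) k.cast_nonneg

end Bounds

namespace LiStar

/-- The summand of `LiStar s x` at the tuple `v` of summation indices. -/
noncomputable def term (s : List ℕ) (x : List ℝ) (v : Fin s.length → ℕ) : ℝ :=
  ∏ i : Fin s.length, x.getD (i : ℕ) 0 ^ v i / (v i : ℝ) ^ s.get i

/-- The tuples `n ≥ v₁ ≥ ⋯ ≥ v_k ≥ 1`, over which a multiple polylogarithm is truncated. -/
def boundedIndices (k n : ℕ) : Finset (Fin k → ℕ) :=
  {v ∈ Fintype.piFinset fun _ ↦ Icc 1 n | ∀ i j, i ≤ j → v j ≤ v i}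

/-- The partial sum of `LiStar s x` over the indices `n ≥ n₁ ≥ n₂ ≥ ⋯ ≥ 1`. -/
noncomputable def partialSum (s : List ℕ) (x : List ℝ) (n : ℕ) : ℝ :=
  ∑ v ∈ boundedIndices s.length n, term s x v

variable {s : List ℕ} {x : List ℝ}

theorem mem_boundedIndices {k n : ℕ} {v : Fin k → ℕ} :
    v ∈ boundedIndices k n ↔ ((∀ i j, i ≤ j → v j ≤ v i) ∧ ∀ i, 1 ≤ v i) ∧ ∀ i, v i ≤ n := by
  simp only [boundedIndices, mem_filter, Fintype.mem_piFinset, mem_Icc, forall_and]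
  tauto

theorem cons_mem_boundedIndices {k n a : ℕ} {v : Fin k → ℕ} :
    (Fin.cons a v : Fin (k + 1) → ℕ) ∈ boundedIndices (k + 1) n ↔
      a ∈ Icc 1 n ∧ v ∈ boundedIndices k a := by
  simp only [mem_boundedIndices, Fin.forall_fin_succ, Fin.cons_zero, Fin.cons_succ, mem_Icc,
    Fin.succ_le_succ_iff, Fin.zero_le, le_refl, Fin.le_zero_iff, Fin.succ_ne_zero, forall_const,
    true_and, false_imp_iff]
  constructor
  · rintro ⟨⟨⟨hva, hv⟩, ha1, hv1⟩, han, -⟩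
    exact ⟨⟨ha1, han⟩, ⟨hv, hv1⟩, hva⟩
  · rintro ⟨⟨ha1, han⟩, ⟨hv, hv1⟩, hva⟩
    exact ⟨⟨⟨hva, hv⟩, ha1, hv1⟩, han, fun i ↦ (hva i).trans han⟩

theorem sum_boundedIndices_succ {M : Type*} [AddCommMonoid M] (k n : ℕ)
    (f : (Fin (k + 1) → ℕ) → M) :
    ∑ v ∈ boundedIndices (k + 1) n, f v =
      ∑ a ∈ Icc 1 n, ∑ v ∈ boundedIndices k a, f (Fin.cons a v) := by
  rw [sum_sigma']
  refine sum_nbij' (fun v ↦ ⟨v 0, Fin.tail v⟩) (fun p ↦ Fin.cons p.1 p.2)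
    (fun v hv ↦ ?_) (fun p hp ↦ ?_) (fun v _ ↦ Fin.cons_self_tail v) (fun p _ ↦ ?_)
    (fun v _ ↦ by rw [Fin.cons_self_tail])
  · rw [← Fin.cons_self_tail v, cons_mem_boundedIndices] at hv
    exact mem_sigma.2 hv
  · exact cons_mem_boundedIndices.2 (mem_sigma.1 hp)
  · simp

theorem term_cons (r : ℕ) (s : List ℕ) (y : ℝ) (x : List ℝ) (n : ℕ) (v : Fin s.length → ℕ) :
    term (r :: s) (y :: x) (Fin.cons n v) = y ^ n / (n : ℝ) ^ r * term s x v :=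
  Fin.prod_univ_succ _

theorem abs_term (s : List ℕ) (x : List ℝ) (v : Fin s.length → ℕ) :
    |term s x v| = term s (x.map abs) v := by
  simp only [term, abs_prod, abs_div, abs_pow, Nat.abs_cast]
  refine prod_congr rfl fun i _ ↦ ?_
  rw [← abs_zero, List.getD_map, abs_zero]

theorem partialSum_nil (x : List ℝ) (n : ℕ) : partialSum [] x n = 1 := by
  have : boundedIndices 0 n = univ := by
    ext
    simp only [mem_boundedIndices, Fin.forall_fin_zero, and_self, mem_univ]
  simp [partialSum, term, this]

theorem partialSum_cons (r : ℕ) (s : List ℕ) (y : ℝ) (x : List ℝ) (n : ℕ) :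
    partialSum (r :: s) (y :: x) n = ∑ k ∈ Icc 1 n, y ^ k / (k : ℝ) ^ r * partialSum s x k := by
  simp only [partialSum, List.length_cons, sum_boundedIndices_succ, mul_sum]
  exact sum_congr rfl fun k _ ↦ sum_congr rfl fun v _ ↦ term_cons r s y x k v

theorem tendsto_partialSum {C : ℝ} (hC : ∀ᶠ n in atTop, partialSum s (x.map abs) n ≤ C) :
    Tendsto (partialSum s x) atTop (𝓝 (LiStar s x)) := by
  let I := {v : Fin s.length → ℕ // (∀ i j, i ≤ j → v j ≤ v i) ∧ ∀ i, 1 ≤ v i}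
  let T (n : ℕ) : Finset I := (boundedIndices s.length n).subtype _
  have mem_T {n : ℕ} {v : I} : v ∈ T n ↔ ∀ i, v.1 i ≤ n :=
    mem_subtype.trans (mem_boundedIndices.trans (and_iff_right v.2))
  have sum_T (y : List ℝ) (n : ℕ) : ∑ v ∈ T n, term s y v.1 = partialSum s y n :=
    sum_subtype_of_mem (term s y) fun v hv ↦ (mem_boundedIndices.1 hv).1
  have hT : Tendsto T atTop atTop := tendsto_atTop_finset_of_monotone
    (fun a b hab v hv ↦ mem_T.2 fun i ↦ (mem_T.1 hv i).trans hab)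
    fun v ↦ ⟨∑ i, v.1 i, mem_T.2 fun i ↦ single_le_sum (fun _ _ ↦ Nat.zero_le _) (mem_univ i)⟩
  have hsum : Summable fun v : I ↦ |term s x v.1| := by
    refine summable_of_sum_le (c := C) (fun v ↦ abs_nonneg _) fun t ↦ ?_
    obtain ⟨n, htn, hn⟩ := ((hT.eventually_ge_atTop t).and hC).exists
    calc ∑ v ∈ t, |term s x v.1| ≤ ∑ v ∈ T n, |term s x v.1| :=
          sum_le_sum_of_subset_of_nonneg htn fun _ _ _ ↦ abs_nonneg _
      _ = partialSum s (x.map abs) n := by simp only [abs_term, sum_T]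
      _ ≤ C := hn
  exact (hsum.of_abs.hasSum.comp hT).congr (sum_T x)

theorem geomSeq_mul_partialSum_nil (w : ℝ) (x : List ℝ) :
    geomSeq w * partialSum [] x = geomSeq w := by
  funext n
  rw [Pi.mul_apply, partialSum_nil, mul_one]

theorem geomSeq_mul_partialSum_cons (w y : ℝ) (r : ℕ) (s : List ℕ) (x : List ℝ) :
    geomSeq w * partialSum ((r + 1) :: s) (y :: x) =
      (w :: List.replicate r 0).foldr harmonicSum (geomSeq (w * y) * partialSum s x) := by
  funext n
  rw [List.foldr_cons, Pi.mul_apply]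
  induction n with
  | zero => exact zero_mul _
  | succ n ih =>
    rw [harmonicSum, ← ih, foldr_replicate_zero_harmonicSum, partialSum_cons, partialSum_cons,
      sum_Icc_succ_top (Nat.le_add_left 1 n), Pi.mul_apply, geomSeq]
    cases n <;> simp only [geomSeq]
    · simp [mul_assoc]
    · push_cast
      field_simp
      ring

theorem geomSeq_mul_partialSum_replicate_append (w : ℝ) (k : ℕ) (s : List ℕ) (x : List ℝ) :
    geomSeq w * partialSum (List.replicate k 1 ++ s) (List.replicate k 1 ++ x) =
      (List.replicate k w).foldr harmonicSum (geomSeq w * partialSum s x) := by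
  induction k with
  | zero => rfl
  | succ k ih =>
    simp only [List.replicate_succ, List.cons_append]
    rw [geomSeq_mul_partialSum_cons, mul_one, ih]
    rfl

theorem tendsto_geomSeq_one_mul_partialSum
    (h : ∃ C, ∀ n, (geomSeq (1 : ℝ) * partialSum s (x.map abs)) n ≤ C) :
    Tendsto (geomSeq 1 * partialSum s x) atTop (𝓝 (LiStar s x)) := by
  obtain ⟨C, hC⟩ := h
  have geomSeq_mul_eq (y : List ℝ) :
      ∀ᶠ n in atTop, (geomSeq (1 : ℝ) * partialSum s y) n = partialSum s y n := by
    filter_upwards [eventually_ge_atTop 1] with n hn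
    obtain ⟨k, rfl⟩ := Nat.exists_eq_add_of_le' hn
    rw [Pi.mul_apply, geomSeq, one_pow, one_mul]
  have hbound : ∀ᶠ n in atTop, partialSum s (x.map abs) n ≤ C :=
    (geomSeq_mul_eq _).mono fun n hn ↦ hn.symm.trans_le (hC n)
  exact (tendsto_partialSum hbound).congr' <| (geomSeq_mul_eq x).mono fun n hn ↦ hn.symm

end LiStar

section BlockWeights

variable {K : Type*} [One K]

/-- The list of weights `⊔_{i=1}^d {1, {c}_{mᵢ+1}, {1}_{uᵢ}} ⊔ {1, {c}_{m_{d+1}+1}}`. With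
`c = 1 - p` it produces the left side of the depth-reduction formula, with `c = 0` the right
side. -/
def blockWeights (c : K) (d : ℕ) (m : Fin (d + 1) → ℕ) (u : Fin d → ℕ) : List K :=
  (List.ofFn fun i : Fin d ↦
    1 :: (List.replicate (m i.castSucc + 1) c ++ List.replicate (u i) 1)).flatten ++
    1 :: List.replicate (m (Fin.last d) + 1) c

theorem blockWeights_succ (c : K) (d : ℕ) (m : Fin (d + 1 + 1) → ℕ) (u : Fin (d + 1) → ℕ) :
    blockWeights c (d + 1) m u =
      1 :: (List.replicate (m 0 + 1) c ++ (List.replicate (u 0) 1 ++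
        blockWeights c d (fun i ↦ m i.succ) fun i ↦ u i.succ)) := by
  simp [blockWeights, List.ofFn_succ]

theorem map_blockWeights {L : Type*} [One L] {f : K → L} (hf : f 1 = 1) (c : K) (d : ℕ)
    (m : Fin (d + 1) → ℕ) (u : Fin d → ℕ) :
    (blockWeights c d m u).map f = blockWeights (f c) d m u := by
  simp [blockWeights, List.map_flatten, List.map_ofFn, Function.comp_def, hf]

theorem mem_blockWeights {b c : K} {d : ℕ} {m : Fin (d + 1) → ℕ} {u : Fin d → ℕ}
    (hb : b ∈ blockWeights c d m u) : b = 1 ∨ b = c := by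
  simp only [blockWeights, List.mem_append, List.mem_flatten, List.mem_ofFn, List.mem_cons,
    exists_exists_eq_and, List.mem_replicate] at hb
  tauto

theorem exists_blockWeights_eq_one_cons (c : K) (d : ℕ) (m : Fin (d + 1) → ℕ) (u : Fin d → ℕ) :
    ∃ cs, blockWeights c d m u = 1 :: c :: cs := by
  cases d with
  | zero => exact ⟨_, rfl⟩
  | succ d => exact ⟨_, blockWeights_succ c d m u⟩

theorem exists_iteratedHarmonicSum_blockWeights_le {c z : ℝ} (hc0 : 0 ≤ c) (hc1 : c < 1)
    (hz0 : 0 ≤ z) (hz1 : z ≤ 1) (d : ℕ) (m : Fin (d + 1) → ℕ) (u : Fin d → ℕ) :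
    ∃ C, ∀ n, iteratedHarmonicSum (blockWeights c d m u) z n ≤ C := by
  obtain ⟨cs, hcs⟩ := exists_blockWeights_eq_one_cons c d m u
  rw [hcs]
  refine exists_iteratedHarmonicSum_one_cons_le hc0 hc1 (fun b hb ↦ ?_) hz0 hz1
  have hb' : b ∈ blockWeights c d m u := hcs ▸ List.mem_cons_of_mem _ (List.mem_cons_of_mem _ hb)
  rcases mem_blockWeights hb' with rfl | rfl
  · exact ⟨zero_le_one, le_rfl⟩
  · exact ⟨hc0, hc1.le⟩

end BlockWeights

section DepthReduction

open LiStar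

theorem sTup_succ (d : ℕ) (m : Fin (d + 1 + 1) → ℕ) (u : Fin (d + 1) → ℕ) :
    sTup (d + 1) m u = (m 0 + 2) :: (List.replicate (u 0) 1 ++
      sTup d (fun i ↦ m i.succ) fun i ↦ u i.succ) := by
  simp [sTup, List.ofFn_succ]

theorem xPre_succ (d : ℕ) (m : Fin (d + 1 + 1) → ℕ) (u : Fin (d + 1) → ℕ) (p : ℝ) :
    xPre (d + 1) m u p = (1 - p) :: (List.replicate (m 0) 1 ++ 1 / (1 - p) ::
      (List.replicate (u 0) 1 ++ xPre d (fun i ↦ m i.succ) (fun i ↦ u i.succ) p)) := by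
  simp [xPre, List.ofFn_succ]

variable (d : ℕ) (m : Fin (d + 1) → ℕ) (u : Fin d → ℕ) {p t z : ℝ}

theorem map_abs_xPre (p : ℝ) : (xPre d m u p).map abs = xPre d m u (1 - |1 - p|) := by
  simp [xPre, List.map_flatten, List.map_ofFn, Function.comp_def, abs_inv]

theorem geomSeq_one_mul_partialSum_xPre (hp : p ≠ 1) :
    geomSeq 1 * partialSum (List.replicate (sTup d m u).sum 1)
        (xPre d m u p ++ (1 - p) :: List.replicate (m (Fin.last d) + 1) 1) =
      iteratedHarmonicSum (blockWeights (1 - p) d m u) (1 - p) := by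
  induction d with
  | zero =>
    have weight_eq : (sTup 0 m u).sum = m 0 + 1 + 1 := by simp [sTup]
    have ones := geomSeq_mul_partialSum_replicate_append (1 - p) (m 0 + 1) [] []
    rw [List.append_nil, List.append_nil, geomSeq_mul_partialSum_nil] at ones
    rw [weight_eq, List.replicate_succ]
    refine (geomSeq_mul_partialSum_cons 1 (1 - p) 0 _ _).trans ?_
    rw [one_mul, Fin.last_zero, ones]
    rfl
  | succ d ih =>
    have weight_eq : (sTup (d + 1) m u).sum =
        m 0 + (u 0 + (sTup d (fun i ↦ m i.succ) fun i ↦ u i.succ).sum + 1) + 1 := by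
      rw [sTup_succ, List.sum_cons, List.sum_append_nat, List.sum_replicate_nat]
      ring
    have tail := ih (fun i ↦ m i.succ) fun i ↦ u i.succ
    rw [Fin.succ_last] at tail
    rw [weight_eq, xPre_succ, List.cons_append, List.append_assoc, List.cons_append,
      List.append_assoc, List.replicate_succ, geomSeq_mul_partialSum_cons, one_mul,
      List.replicate_add (m 0), geomSeq_mul_partialSum_replicate_append, List.replicate_succ,
      geomSeq_mul_partialSum_cons, mul_one_div_cancel (sub_ne_zero.2 hp.symm),
      List.replicate_add (u 0), geomSeq_mul_partialSum_replicate_append, tail, blockWeights_succ,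
      List.replicate_succ']
    simp only [iteratedHarmonicSum, List.foldr_cons, List.foldr_append, List.replicate_zero,
      List.foldr_nil]

theorem geomSeq_one_mul_partialSum_sTup (z : ℝ) :
    geomSeq 1 * partialSum (sTup d m u) (List.replicate ((sTup d m u).length - 1) 1 ++ [z]) =
      iteratedHarmonicSum (blockWeights 0 d m u) z := by
  induction d with
  | zero =>
    refine (geomSeq_mul_partialSum_cons 1 z (m 0 + 1) [] []).trans ?_
    rw [one_mul, geomSeq_mul_partialSum_nil]
    rfl
  | succ d ih =>
    have length_eq : (sTup (d + 1) m u).length - 1 =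
        u 0 + ((sTup d (fun i ↦ m i.succ) fun i ↦ u i.succ).length - 1) + 1 := by
      simp [sTup, add_assoc]
    rw [length_eq, sTup_succ, List.replicate_succ, List.cons_append, geomSeq_mul_partialSum_cons,
      List.replicate_add, List.append_assoc, one_mul, geomSeq_mul_partialSum_replicate_append, ih,
      blockWeights_succ]
    simp only [iteratedHarmonicSum, List.foldr_cons, List.foldr_append]

theorem tendsto_iteratedHarmonicSum_blockWeights_one_sub (hp : p ∈ Set.Ioo 0 2) (hp1 : p ≠ 1) :
    Tendsto (iteratedHarmonicSum (blockWeights (1 - p) d m u) (1 - p)) atTop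
      (𝓝 (LiStar (List.replicate (sTup d m u).sum 1)
        (xPre d m u p ++ (1 - p) :: List.replicate (m (Fin.last d) + 1) 1))) := by
  have habs : |1 - p| < 1 := abs_lt.2 ⟨by linarith [hp.2], by linarith [hp.1]⟩
  have hne : 1 - |1 - p| ≠ 1 := by simpa [sub_eq_zero] using hp1.symm
  rw [← geomSeq_one_mul_partialSum_xPre d m u hp1]
  refine tendsto_geomSeq_one_mul_partialSum ?_
  have abs_identity := geomSeq_one_mul_partialSum_xPre d m u hne
  rw [sub_sub_cancel] at abs_identity
  simp only [List.map_append, List.map_cons, List.map_replicate, abs_one, map_abs_xPre,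
    abs_identity]
  exact exists_iteratedHarmonicSum_blockWeights_le (abs_nonneg _) habs (abs_nonneg _) habs.le d m u

theorem tendsto_iteratedHarmonicSum_blockWeights_zero (hz : |z| ≤ 1) :
    Tendsto (iteratedHarmonicSum (blockWeights 0 d m u) z) atTop
      (𝓝 (LiStar (sTup d m u) (List.replicate ((sTup d m u).length - 1) 1 ++ [z]))) := by
  rw [← geomSeq_one_mul_partialSum_sTup d m u z]
  refine tendsto_geomSeq_one_mul_partialSum ?_
  simp only [List.map_append, List.map_cons, List.map_nil, List.map_replicate, abs_one,
    geomSeq_one_mul_partialSum_sTup]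
  exact exists_iteratedHarmonicSum_blockWeights_le le_rfl zero_lt_one (abs_nonneg _) hz d m u

theorem tendsto_iteratedHarmonicSum_blockWeights {L : ℝ} (ht0 : 0 ≤ t) (ht1 : t < 1)
    (hz : t + (1 - t) * z = 0) (c : ℝ)
    (h : Tendsto (iteratedHarmonicSum (blockWeights c d m u) z) atTop (𝓝 L)) :
    Tendsto (iteratedHarmonicSum (blockWeights (t + (1 - t) * c) d m u) t) atTop (𝓝 (-L)) := by
  have h' := tendsto_iteratedHarmonicSum_map ht0 ht1 hz h
  rwa [map_blockWeights (by ring)] at h'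

theorem stmt_15_general (hp : p ∈ Set.Ico (1 / 2 : ℝ) 2) (hp1 : p ≠ 1) :
    LiStar (List.replicate (sTup d m u).sum 1)
        (xPre d m u p ++ (1 - p) :: List.replicate (m (Fin.last d) + 1) (1 : ℝ)) =
      -LiStar (sTup d m u)
        (List.replicate ((sTup d m u).length - 1) (1 : ℝ) ++ [1 - 1 / p]) := by
  obtain ⟨hp_half, hp_two⟩ := hp
  have hp0 : 0 < p := by linarith
  have inv_le_two : 1 / p ≤ 2 := (div_le_comm₀ hp0 two_pos).2 hp_half
  have inv_pos : 0 < 1 / p := one_div_pos.2 hp0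
  have left := tendsto_iteratedHarmonicSum_blockWeights_one_sub d m u ⟨hp0, hp_two⟩ hp1
  have right := tendsto_iteratedHarmonicSum_blockWeights_zero d m u (z := 1 - 1 / p)
    (abs_le.2 ⟨by linarith, by linarith⟩)
  rcases hp1.lt_or_gt with hlt | hgt
  · have transformed := tendsto_iteratedHarmonicSum_blockWeights d m u (t := 1 - p)
      (by linarith) (by linarith) (by field_simp; ring) 0 right
    rw [mul_zero, add_zero] at transformed
    exact tendsto_nhds_unique left transformed
  · have inv_le_one : 1 / p ≤ 1 := (div_le_one hp0).2 hgt.le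
    have transformed := tendsto_iteratedHarmonicSum_blockWeights d m u (t := 1 - 1 / p)
      (by linarith) (by linarith) (by field_simp; ring) (1 - p) left
    have weight_eq_zero : 1 - 1 / p + (1 - (1 - 1 / p)) * (1 - p) = 0 := by field_simp; ring
    rw [weight_eq_zero] at transformed
    rw [tendsto_nhds_unique right transformed, neg_neg]

end DepthReduction

/-- Depth-reduction formula (Corollary 3.2, first identity). -/
theorem stmt_15 (d : ℕ) (m : Fin (d + 1) → ℕ) (u : Fin d → ℕ) (p : ℝ)
    (hp : p ∈ Set.Icc (1 / 2 : ℝ) (3 / 2)) (hp1 : p ≠ 1) :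
    LiStar (List.replicate (sTup d m u).sum 1)
        (xPre d m u p ++ (1 - p) :: List.replicate (m (Fin.last d) + 1) (1 : ℝ)) =
      -LiStar (sTup d m u)
        (List.replicate ((sTup d m u).length - 1) (1 : ℝ) ++ [1 - 1 / p]) :=
  stmt_15_general d m u ⟨hp.1, hp.2.trans_lt (by norm_num)⟩ hp1
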